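/- arXiv:1012.0691 — 8 statements merged into one kernel-verified Lean document; each statement's English description precedes it below -/
import Mathlib

section
/- For every λ > 0, every h ≥ 0 and every t ∈ ℝ, ∫_ℝ exp(−λ|t+h−u|)·exp(−λ|t−u|) du = h·exp(−λh) + (1/λ)·exp(−λh). Consequently the normalized autocovariance c_λ(h) := ∫_ℝ exp(−λ|h−u|)·exp(−λ|u|) du satisfies c_λ(h)/c_λ(0) = λh·exp(−λh) + exp(−λh). -/
/-!
Translating `u` by `t` turns the covariance integral into
`∫ u, exp (-lam |h - u|) * exp (-lam |u|)`, so stationarity reduces everything to the single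
evaluation `integral_two_exp_kernels`. That integral is computed by splitting the line at the two
kinks `0` and `h` of the kernels, where the integrand is a pure exponential on each piece. The
normalized formula is the quotient by the value `1 / lam` at lag `0`.
-/


open MeasureTheory Real

/-- The overlap integral of two two-sided exponential kernels, centred at `0` and at `h ≥ 0`.
On `(-∞, 0]`, `(0, h]` and `(h, ∞)` the integrand is `exp (-lam h) exp (2 lam u)`,
`exp (-lam h)` and `exp (lam h) exp (-2 lam u)`; the tails contribute `exp (-lam h) / (2 lam)`
each and the middle piece `h exp (-lam h)`. -/
lemma integral_two_exp_kernels {lam : ℝ} (hlam : 0 < lam) {h : ℝ} (hh : 0 ≤ h) :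
    ∫ u : ℝ, Real.exp (-(lam * |h - u|)) * Real.exp (-(lam * |u|))
      = h * Real.exp (-(lam * h)) + (1 / lam) * Real.exp (-(lam * h)) := by
  set f : ℝ → ℝ := fun u => Real.exp (-(lam * |h - u|)) * Real.exp (-(lam * |u|)) with hf
  have hleft : Set.EqOn f (fun u => Real.exp (-(lam * h)) * Real.exp (2 * lam * u))
      (Set.Iic 0) := by
    intro u hu
    have hu : u ≤ 0 := hu
    simp only [hf]
    rw [abs_of_nonneg (by linarith : 0 ≤ h - u), abs_of_nonpos hu, ← Real.exp_add,
      ← Real.exp_add]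
    ring_nf
  have hmid : Set.EqOn f (fun _ => Real.exp (-(lam * h))) (Set.Ioc 0 h) := by
    intro u hu
    simp only [hf]
    rw [abs_of_nonneg (by linarith [hu.2] : 0 ≤ h - u), abs_of_pos hu.1, ← Real.exp_add]
    ring_nf
  have hright : Set.EqOn f (fun u => Real.exp (lam * h) * Real.exp (-(2 * lam) * u))
      (Set.Ioi h) := by
    intro u hu
    have hu : h < u := hu
    simp only [hf]
    rw [abs_of_nonpos (by linarith : h - u ≤ 0), abs_of_pos (by linarith : 0 < u),
      ← Real.exp_add, ← Real.exp_add]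
    ring_nf
  have ileft : IntegrableOn f (Set.Iic 0) :=
    (integrableOn_congr_fun hleft measurableSet_Iic).2
      ((integrableOn_exp_mul_Iic (by positivity) 0).const_mul _)
  have imid : IntegrableOn f (Set.Ioc 0 h) :=
    (integrableOn_congr_fun hmid measurableSet_Ioc).2
      (integrableOn_const (by simp))
  have iright : IntegrableOn f (Set.Ioi h) :=
    (integrableOn_congr_fun hright measurableSet_Ioi).2
      ((integrableOn_exp_mul_Ioi (by linarith) h).const_mul _)
  have iIoi : IntegrableOn f (Set.Ioi 0) := by
    rw [← Set.Ioc_union_Ioi_eq_Ioi hh]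
    exact imid.union iright
  have vleft : ∫ u in Set.Iic 0, f u = Real.exp (-(lam * h)) / (2 * lam) := by
    rw [setIntegral_congr_fun measurableSet_Iic hleft, integral_const_mul,
      integral_exp_mul_Iic (by positivity)]
    simp [div_eq_mul_inv]
  have vmid : ∫ u in Set.Ioc 0 h, f u = h * Real.exp (-(lam * h)) := by
    rw [setIntegral_congr_fun measurableSet_Ioc hmid]
    simp [hh]
  have vright : ∫ u in Set.Ioi h, f u = Real.exp (-(lam * h)) / (2 * lam) := by
    rw [setIntegral_congr_fun measurableSet_Ioi hright, integral_const_mul,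
      integral_exp_mul_Ioi (by linarith), neg_div_neg_eq, ← mul_div_assoc, ← Real.exp_add]
    ring_nf
  rw [← intervalIntegral.integral_Iic_add_Ioi ileft iIoi, ← Set.Ioc_union_Ioi_eq_Ioi hh,
    setIntegral_union Set.Ioc_disjoint_Ioi_same measurableSet_Ioi imid iright,
    vleft, vmid, vright]
  field_simp
  ring

/-- For every `λ > 0`, `h ≥ 0` and `t ∈ ℝ`,
`∫_ℝ exp (−λ|t+h−u|) · exp (−λ|t−u|) du = h·exp(−λh) + (1/λ)·exp(−λh)`.
Consequently the normalized autocovariance `c_λ(h) = ∫_ℝ exp(−λ|h−u|)·exp(−λ|u|) du`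
satisfies `c_λ(h)/c_λ(0) = λh·exp(−λh) + exp(−λh)`. -/
theorem wbou_autocovariance (lam : ℝ) (hlam : 0 < lam) (h : ℝ) (hh : 0 ≤ h) (t : ℝ) :
    (∫ u : ℝ, Real.exp (-(lam * |t + h - u|)) * Real.exp (-(lam * |t - u|))
      = h * Real.exp (-(lam * h)) + (1 / lam) * Real.exp (-(lam * h))) ∧
    ((∫ u : ℝ, Real.exp (-(lam * |h - u|)) * Real.exp (-(lam * |u|))) /
        (∫ u : ℝ, Real.exp (-(lam * |(0 : ℝ) - u|)) * Real.exp (-(lam * |u|)))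
      = lam * h * Real.exp (-(lam * h)) + Real.exp (-(lam * h))) := by
  have c := integral_two_exp_kernels hlam hh
  have c0 := integral_two_exp_kernels hlam (le_refl (0 : ℝ))
  constructor
  · rw [← c, ← integral_sub_right_eq_self
      (fun w : ℝ => Real.exp (-(lam * |h - w|)) * Real.exp (-(lam * |w|))) t]
    refine integral_congr_ae (Filter.Eventually.of_forall fun u => ?_)
    simp only
    rw [abs_sub_comm t u, show t + h - u = h - (u - t) by ring]
  · rw [c, c0]
    simp only [mul_zero, neg_zero, Real.exp_zero]
    field_simp
    ring
end

section
/- For every λ > 0 and all real s ≤ t, ∫_ℝ (exp(−λ|t−u|) − exp(−λ|s−u|))² du = (2/λ)·(1 − exp(−λ(t−s)) − λ(t−s)·exp(−λ(t−s))). -/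
/-!
The integrand is smooth on each side of the kinks at `s` and `t`. With
`d = exp (-(lam * (t - s)))`, it is a multiple of `exp (2 * lam * u)` on `(-∞, s]` and of
`exp (-2 * lam * u)` on `(t, ∞)`, each tail contributing `(1 - d) ^ 2 / (2 * lam)`. On `[s, t]` it
is `exp (2 * lam * (u - t)) + exp (-2 * lam * (u - s)) - 2 * d`, whose integral is
`(1 - d ^ 2) / lam - 2 * d * (t - s)`. The three contributions add up to the claimed value.
-/

open MeasureTheory Real

/-- The squared difference of the two kernels to the left of both kinks. -/
lemma kernel_sq_left (lam s t u : ℝ) (hst : s ≤ t) (hu : u ≤ s) :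
    (Real.exp (-(lam * |t - u|)) - Real.exp (-(lam * |s - u|))) ^ 2
      = (Real.exp (-(lam * t)) - Real.exp (-(lam * s))) ^ 2 * Real.exp ((2 * lam) * u) := by
  rw [abs_of_nonneg (by linarith : 0 ≤ t - u), abs_of_nonneg (by linarith : 0 ≤ s - u),
    show -(lam * (t - u)) = -(lam * t) + lam * u by ring,
    show -(lam * (s - u)) = -(lam * s) + lam * u by ring,
    show 2 * lam * u = lam * u + lam * u by ring]
  simp only [Real.exp_add]
  ring

/-- The squared difference of the two kernels to the right of both kinks. -/
lemma kernel_sq_right (lam s t u : ℝ) (hst : s ≤ t) (hu : t ≤ u) :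
    (Real.exp (-(lam * |t - u|)) - Real.exp (-(lam * |s - u|))) ^ 2
      = (Real.exp (lam * t) - Real.exp (lam * s)) ^ 2 * Real.exp ((-(2 * lam)) * u) := by
  rw [abs_of_nonpos (by linarith : t - u ≤ 0), abs_of_nonpos (by linarith : s - u ≤ 0),
    show -(lam * -(t - u)) = lam * t + -(lam * u) by ring,
    show -(lam * -(s - u)) = lam * s + -(lam * u) by ring,
    show -(2 * lam) * u = -(lam * u) + -(lam * u) by ring]
  simp only [Real.exp_add]
  ring

/-- The squared difference of the two kernels between the kinks; the cross term is constant. -/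
lemma kernel_sq_mid (lam s t u : ℝ) (hs : s ≤ u) (ht : u ≤ t) :
    (Real.exp (-(lam * |t - u|)) - Real.exp (-(lam * |s - u|))) ^ 2
      = Real.exp (2 * lam * (u - t)) + Real.exp (-(2 * lam) * (u - s))
        - 2 * Real.exp (-(lam * (t - s))) := by
  rw [abs_of_nonneg (by linarith : 0 ≤ t - u), abs_of_nonpos (by linarith : s - u ≤ 0),
    show 2 * lam * (u - t) = -(lam * (t - u)) + -(lam * (t - u)) by ring,
    show -(2 * lam) * (u - s) = -(lam * -(s - u)) + -(lam * -(s - u)) by ring,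
    show -(lam * (t - s)) = -(lam * (t - u)) + -(lam * -(s - u)) by ring]
  simp only [Real.exp_add]
  ring

lemma integral_kernel_sq_mid (lam : ℝ) (hlam : 0 < lam) (s t : ℝ) (hst : s ≤ t) :
    ∫ u in s..t, (Real.exp (-(lam * |t - u|)) - Real.exp (-(lam * |s - u|))) ^ 2
      = (1 - Real.exp (-(lam * (t - s))) ^ 2) / lam
        - 2 * Real.exp (-(lam * (t - s))) * (t - s) := by
  have hderiv : ∀ u ∈ Set.uIcc s t, HasDerivAt
      (fun u : ℝ => (Real.exp (2 * lam * (u - t)) - Real.exp (-(2 * lam) * (u - s))) / (2 * lam)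
        - 2 * Real.exp (-(lam * (t - s))) * u)
      ((Real.exp (-(lam * |t - u|)) - Real.exp (-(lam * |s - u|))) ^ 2) u := by
    intro u hu
    rw [Set.uIcc_of_le hst] at hu
    rw [kernel_sq_mid lam s t u hu.1 hu.2]
    have h1 := ((((hasDerivAt_id u).sub_const t).const_mul (2 * lam)).exp)
    have h2 := ((((hasDerivAt_id u).sub_const s).const_mul (-(2 * lam))).exp)
    have h3 := (hasDerivAt_id u).const_mul (2 * Real.exp (-(lam * (t - s))))
    refine (((h1.sub h2).div_const (2 * lam)).sub h3).congr_deriv ?_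
    simp only [id]
    field_simp
    ring
  rw [intervalIntegral.integral_eq_sub_of_hasDerivAt hderiv
    (Continuous.intervalIntegrable (by fun_prop) _ _)]
  have e1 : Real.exp (2 * lam * (s - t)) = Real.exp (-(lam * (t - s))) ^ 2 := by
    rw [← Real.exp_nat_mul]; congr 1; push_cast; ring
  have e2 : Real.exp (-(2 * lam) * (t - s)) = Real.exp (-(lam * (t - s))) ^ 2 := by
    rw [← Real.exp_nat_mul]; congr 1; push_cast; ring
  rw [e1, e2]
  simp only [sub_self, mul_zero, Real.exp_zero]
  field_simp
  ring

/-- For every `λ > 0` and all real `s ≤ t`,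
`∫_ℝ (exp(−λ|t−u|) − exp(−λ|s−u|))² du
  = (2/λ)·(1 − exp(−λ(t−s)) − λ(t−s)·exp(−λ(t−s)))`. -/
theorem wbou_increment_variance (lam : ℝ) (hlam : 0 < lam) (s t : ℝ) (hst : s ≤ t) :
    ∫ u : ℝ, (Real.exp (-(lam * |t - u|)) - Real.exp (-(lam * |s - u|))) ^ 2
      = (2 / lam) *
        (1 - Real.exp (-(lam * (t - s))) - lam * (t - s) * Real.exp (-(lam * (t - s)))) := by
  have hpos : 0 < 2 * lam := by positivity
  have hL := fun u (hu : u ∈ Set.Iic s) => kernel_sq_left lam s t u hst hu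
  have hR := fun u (hu : u ∈ Set.Ioi t) => kernel_sq_right lam s t u hst (le_of_lt hu)
  have iL : IntegrableOn
      (fun u => (Real.exp (-(lam * |t - u|)) - Real.exp (-(lam * |s - u|))) ^ 2) (Set.Iic s) :=
    (integrableOn_congr_fun hL measurableSet_Iic).2
      ((integrableOn_exp_mul_Iic hpos s).const_mul _)
  have iR : IntegrableOn
      (fun u => (Real.exp (-(lam * |t - u|)) - Real.exp (-(lam * |s - u|))) ^ 2) (Set.Ioi t) :=
    (integrableOn_congr_fun hR measurableSet_Ioi).2
      ((integrableOn_exp_mul_Ioi (neg_lt_zero.2 hpos) t).const_mul _)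
  have iM : IntervalIntegrable
      (fun u => (Real.exp (-(lam * |t - u|)) - Real.exp (-(lam * |s - u|))) ^ 2) volume s t :=
    Continuous.intervalIntegrable (by fun_prop) _ _
  have iR' : IntegrableOn
      (fun u => (Real.exp (-(lam * |t - u|)) - Real.exp (-(lam * |s - u|))) ^ 2) (Set.Ioi s) := by
    rw [← Set.Ioc_union_Ioi_eq_Ioi hst]
    exact ((intervalIntegrable_iff_integrableOn_Ioc_of_le hst).1 iM).union iR
  rw [← intervalIntegral.integral_Iic_add_Ioi iL iR',
    ← intervalIntegral.integral_interval_add_Ioi' iM iR,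
    integral_kernel_sq_mid lam hlam s t hst,
    setIntegral_congr_fun measurableSet_Iic hL, setIntegral_congr_fun measurableSet_Ioi hR,
    integral_const_mul, integral_const_mul, integral_exp_mul_Iic hpos,
    integral_exp_mul_Ioi (neg_lt_zero.2 hpos)]
  have eL : (Real.exp (-(lam * t)) - Real.exp (-(lam * s))) ^ 2 * Real.exp (2 * lam * s)
      = (1 - Real.exp (-(lam * (t - s)))) ^ 2 := by
    rw [← kernel_sq_left lam s t s hst le_rfl, abs_of_nonneg (sub_nonneg.2 hst)]
    simp only [sub_self, abs_zero, mul_zero, neg_zero, Real.exp_zero]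
    ring
  have eR : (Real.exp (lam * t) - Real.exp (lam * s)) ^ 2 * Real.exp (-(2 * lam) * t)
      = (1 - Real.exp (-(lam * (t - s)))) ^ 2 := by
    rw [← kernel_sq_right lam s t t hst le_rfl, abs_sub_comm s t,
      abs_of_nonneg (sub_nonneg.2 hst)]
    simp only [sub_self, abs_zero, mul_zero, neg_zero, Real.exp_zero]
  rw [neg_div_neg_eq, ← mul_div_assoc, ← mul_div_assoc, eL, eR]
  field_simp
  ring
end

section
/- Let λ > 0 and define c_λ(h) := ∫_ℝ exp(−λ|h−u|)·exp(−λ|u|) du for h ∈ ℝ. Then for every integer k ≥ 1, (2·c_λ(k) − c_λ(k−1) − c_λ(k+1)) / (2·(c_λ(0) − c_λ(1))) = exp(−λk)·(1/2 + (1/2)·(1 − e^λ + λe^λ)/(1 − e^{−λ} − λe^{−λ})) + λk·exp(−λk)·(1/2 + (1/2)·(1 − e^λ + λe^{−λ})/(1 − e^{−λ} − λe^{−λ})). -/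
/-!
For `h ≥ 0` the covariance kernel has the closed form `c_λ(h) = (h + 1/λ) e^{-λh}`: on the three
pieces `(-∞, 0]`, `(0, h]`, `(h, ∞)` the integrand `e^{-λ|h-u|} e^{-λ|u|}` equals
`e^{-λh} e^{2λu}`, the constant `e^{-λh}`, and `e^{λh} e^{-2λu}`, and the pieces contribute
`e^{-λh}/(2λ)`, `h e^{-λh}` and `e^{-λh}/(2λ)`. Since `k ≥ 1`, all arguments of `c` in the
statement are nonnegative, so the claim becomes an identity of rational functions in `λ`, `k`,
`e^λ` and `e^{-λk}`, whose denominator `1 - e^{-λ} - λ e^{-λ}` is positive because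
`e^λ > 1 + λ`.
-/

open MeasureTheory Real

open Set in
lemma integral_exp_abs_mul_exp_abs {l h : ℝ} (hl : 0 < l) (hh : 0 ≤ h) :
    ∫ u : ℝ, Real.exp (-(l * |h - u|)) * Real.exp (-(l * |u|))
      = (h + 1 / l) * Real.exp (-(l * h)) := by
  set f : ℝ → ℝ := fun u => Real.exp (-(l * |h - u|)) * Real.exp (-(l * |u|)) with hf
  have e1 : EqOn f (fun u => Real.exp (-(l * h)) * Real.exp ((2 * l) * u)) (Iic 0) := by
    intro u hu
    have hu : u ≤ 0 := hu
    simp only [hf]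
    rw [abs_of_nonneg (by linarith), abs_of_nonpos hu, ← Real.exp_add, ← Real.exp_add]
    ring_nf
  have e2 : EqOn f (fun _ => Real.exp (-(l * h))) (Ioc 0 h) := by
    intro u hu
    simp only [hf]
    rw [abs_of_nonneg (by linarith [hu.2]), abs_of_pos hu.1, ← Real.exp_add]
    ring_nf
  have e3 : EqOn f (fun u => Real.exp (l * h) * Real.exp ((-(2 * l)) * u)) (Ioi h) := by
    intro u hu
    have hu : h < u := hu
    simp only [hf]
    rw [abs_of_neg (by linarith), abs_of_pos (by linarith), ← Real.exp_add, ← Real.exp_add]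
    ring_nf
  have i1 : IntegrableOn f (Iic 0) :=
    (integrableOn_congr_fun e1 measurableSet_Iic).2
      ((integrableOn_exp_mul_Iic (by linarith) 0).const_mul _)
  have i2 : IntegrableOn f (Ioc 0 h) :=
    (integrableOn_congr_fun e2 measurableSet_Ioc).2 (integrableOn_const (by simp))
  have i3 : IntegrableOn f (Ioi h) :=
    (integrableOn_congr_fun e3 measurableSet_Ioi).2
      ((integrableOn_exp_mul_Ioi (by linarith) h).const_mul _)
  have i23 : IntegrableOn f (Ioi 0) := by
    rw [← Ioc_union_Ioi_eq_Ioi hh]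
    exact i2.union i3
  have s1 : ∫ u, f u = (∫ u in Iic 0, f u) + ∫ u in Ioi 0, f u :=
    (intervalIntegral.integral_Iic_add_Ioi i1 i23).symm
  have s2 : ∫ u in Ioi 0, f u = (∫ u in Ioc 0 h, f u) + ∫ u in Ioi h, f u := by
    rw [← Ioc_union_Ioi_eq_Ioi hh]
    exact setIntegral_union (Ioc_disjoint_Ioi le_rfl) measurableSet_Ioi i2 i3
  rw [s1, s2, setIntegral_congr_fun measurableSet_Iic e1, setIntegral_congr_fun measurableSet_Ioc e2,
    setIntegral_congr_fun measurableSet_Ioi e3, integral_const_mul, integral_const_mul,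
    integral_exp_mul_Iic (by linarith), integral_exp_mul_Ioi (by linarith), setIntegral_const]
  have e4 : Real.exp (-(2 * l) * h) = Real.exp (-(l * h)) * Real.exp (-(l * h)) := by
    rw [← Real.exp_add]
    ring_nf
  have e5 : Real.exp (l * h) * Real.exp (-(l * h)) = 1 := by
    rw [← Real.exp_add]
    simp
  have e6 : Real.exp (l * h) * (-Real.exp (-(2 * l) * h) / -(2 * l))
      = Real.exp (-(l * h)) / (2 * l) := by
    rw [e4, neg_div_neg_eq, mul_div_assoc', ← mul_assoc, e5, one_mul]
  rw [e6]
  simp only [Measure.real, Real.volume_Ioc, sub_zero, ENNReal.toReal_ofReal hh, smul_eq_mul,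
    mul_zero, Real.exp_zero]
  field_simp
  ring

/-- Increment autocorrelation of the well-balanced Ornstein–Uhlenbeck process
(Corollary 4.2): with `c_λ(h) = ∫_ℝ exp(−λ|h−u|)·exp(−λ|u|) du`, for every integer
`k ≥ 1`,
`(2c_λ(k) − c_λ(k−1) − c_λ(k+1)) / (2(c_λ(0) − c_λ(1)))` equals the displayed
closed-form expression. -/
theorem wbou_increment_autocorrelation (lam : ℝ) (hlam : 0 < lam) (k : ℤ) (hk : 1 ≤ k)
    (c : ℝ → ℝ)
    (hc : ∀ h : ℝ, c h = ∫ u : ℝ, Real.exp (-(lam * |h - u|)) * Real.exp (-(lam * |u|))) :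
    (2 * c k - c ((k : ℝ) - 1) - c ((k : ℝ) + 1)) / (2 * (c 0 - c 1))
      = Real.exp (-(lam * k)) *
          (1 / 2 + 1 / 2 * (1 - Real.exp lam + lam * Real.exp lam) /
            (1 - Real.exp (-lam) - lam * Real.exp (-lam)))
        + lam * k * Real.exp (-(lam * k)) *
          (1 / 2 + 1 / 2 * (1 - Real.exp lam + lam * Real.exp (-lam)) /
            (1 - Real.exp (-lam) - lam * Real.exp (-lam))) := by
  have hk' : (1 : ℝ) ≤ k := by exact_mod_cast hk
  have hC : ∀ h : ℝ, 0 ≤ h → c h = (h + 1 / lam) * Real.exp (-(lam * h)) := fun h hh => by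
    rw [hc, integral_exp_abs_mul_exp_abs hlam hh]
  have hD : 0 < 1 - Real.exp (-lam) - lam * Real.exp (-lam) := by
    have h1 : lam + 1 < Real.exp lam := Real.add_one_lt_exp hlam.ne'
    have h2 : Real.exp lam * Real.exp (-lam) = 1 := by
      rw [← Real.exp_add]
      simp
    nlinarith [mul_lt_mul_of_pos_right h1 (Real.exp_pos (-lam))]
  have em : Real.exp (-(lam * ((k : ℝ) - 1))) = Real.exp (-(lam * k)) * Real.exp lam := by
    rw [← Real.exp_add]
    ring_nf
  have ep : Real.exp (-(lam * ((k : ℝ) + 1))) = Real.exp (-(lam * k)) * Real.exp (-lam) := by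
    rw [← Real.exp_add]
    ring_nf
  have hden : 2 * (c 0 - c 1) = 2 * (1 - Real.exp (-lam) - lam * Real.exp (-lam)) / lam := by
    rw [hC 0 le_rfl, hC 1 zero_le_one, mul_zero, neg_zero, Real.exp_zero, mul_one]
    field_simp
    ring
  rw [hden, hC k (by linarith), hC (k - 1) (by linarith), hC (k + 1) (by linarith), em, ep]
  generalize hE : Real.exp (-lam) = E at *
  generalize hd : 1 - E - lam * E = d at *
  have hd' : d ≠ 0 := hD.ne'
  field_simp
  rw [← hd]
  ring
end

section
/- Define ρ(λ) := exp(−λ)·((1+λ)/2 + (1/2)·(1 + λ − e^λ + λ²·e^{−λ})/(1 − e^{−λ} − λ·e^{−λ})) for λ > 0. Then ρ(λ) > 0 for every λ ∈ (0, 1], and ρ(λ) < 0 for every λ ≥ 1.3. -/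
/-!
Writing `E = e^λ` and putting everything over the common denominator, the numerator becomes a
difference of squares, `λ² - (E - 1 - λ)² = (E - 1) (1 + 2λ - E)`. Since `E > 1 + λ > 1`, the sign
of `ρ(λ)` is that of `1 + 2λ - e^λ` (`wbouRho_eq`). This is positive on `(0, 1]` because the convex
function `exp` lies below its chord `1 + (e - 1) λ` there and `e < 3`, and it is negative for
`λ ≥ 1.3` by comparing `exp` with its Taylor polynomial of degree four.
-/

open Real

/-- The first-order autocorrelation of unit increments of the well-balanced
Ornstein–Uhlenbeck process with parameter `λ > 0`. -/
noncomputable def wbouRho (lam : ℝ) : ℝ :=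
  Real.exp (-lam) *
    ((1 + lam) / 2 + 1 / 2 *
      (1 + lam - Real.exp lam + lam ^ 2 * Real.exp (-lam)) /
      (1 - Real.exp (-lam) - lam * Real.exp (-lam)))

/-- The factored form of the autocorrelation: `1 + 2λ - e^λ` is the only factor whose sign
varies with `λ > 0`. -/
lemma wbouRho_eq {lam : ℝ} (h : 0 < lam) :
    wbouRho lam = Real.exp (-lam) * (Real.exp lam - 1) / (2 * (Real.exp lam - 1 - lam)) *
      (1 + 2 * lam - Real.exp lam) := by
  have h1 : lam + 1 < Real.exp lam := Real.add_one_lt_exp h.ne'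
  have hD : Real.exp lam - 1 - lam ≠ 0 := by linarith
  have hE : Real.exp lam ≠ 0 := (Real.exp_pos lam).ne'
  unfold wbouRho
  rw [Real.exp_neg]
  have hq : 1 - (Real.exp lam)⁻¹ - lam * (Real.exp lam)⁻¹
      = (Real.exp lam - 1 - lam) / Real.exp lam := by
    field_simp
  rw [hq]
  field_simp
  ring

lemma wbouRho_factor_pos {lam : ℝ} (h : 0 < lam) :
    0 < Real.exp (-lam) * (Real.exp lam - 1) / (2 * (Real.exp lam - 1 - lam)) := by
  have h1 : lam + 1 < Real.exp lam := Real.add_one_lt_exp h.ne'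
  exact div_pos (mul_pos (Real.exp_pos _) (by linarith)) (by linarith)

/-- `ρ(λ) > 0` for `λ ∈ (0,1]` and `ρ(λ) < 0` for `λ ≥ 1.3`. -/
theorem wbouRho_sign :
    (∀ lam : ℝ, 0 < lam → lam ≤ 1 → 0 < wbouRho lam) ∧
    (∀ lam : ℝ, (1.3 : ℝ) ≤ lam → wbouRho lam < 0) := by
  constructor
  · intro lam h0 h1
    rw [wbouRho_eq h0]
    refine mul_pos (wbouRho_factor_pos h0) ?_
    -- convexity of `exp` along the chord from `0` to `1`
    have hc := convexOn_exp.2 (Set.mem_univ (0 : ℝ)) (Set.mem_univ (1 : ℝ))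
      (sub_nonneg.2 h1) h0.le (by ring)
    simp only [smul_eq_mul, mul_zero, mul_one, zero_add, Real.exp_zero] at hc
    nlinarith [Real.exp_one_lt_d9]
  · intro lam h
    have h0 : 0 < lam := by linarith
    rw [wbouRho_eq h0]
    refine mul_neg_of_pos_of_neg (wbouRho_factor_pos h0) ?_
    have ht := Real.sum_le_exp_of_nonneg h0.le 5
    norm_num [Finset.sum_range_succ, Nat.factorial] at ht
    have h2 : 1.3 ^ 2 ≤ lam ^ 2 := by gcongr
    have h3 : 1.3 ^ 3 ≤ lam ^ 3 := by gcongr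
    have hp : 0 < lam * (-1 + lam / 2 + lam ^ 2 / 6 + lam ^ 3 / 24) :=
      mul_pos h0 (by norm_num at h h2 h3; linarith)
    linarith
end

section
/- Define ρ(λ) := exp(−λ)·((1+λ)/2 + (1/2)·(1 + λ − e^λ + λ²·e^{−λ})/(1 − e^{−λ} − λ·e^{−λ})) for λ > 0. Then −1/2 < ρ(λ) < 1 for every λ > 0; moreover ρ(λ) → 1 as λ → 0⁺ and ρ(λ) → −1/2 as λ → ∞. -/
/-!
Put `D = 1 - e^{-λ} - λ e^{-λ} = e^{-λ} (e^λ - 1 - λ)`, so that `0 < D < 1` for `λ > 0`. Expanding the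
definition, `ρ(λ) = -D/2 + λ² e^{-2λ} / (2 D)`. The lower bound is then immediate, and the upper bound
amounts to `λ² < (e^λ - 1 - λ)² + 2 e^λ (e^λ - 1 - λ)`, which follows from `e^λ ≥ 1 + λ + λ²/2`.
As `λ → ∞`, `D → 1` and `λ e^{-λ} → 0`. As `λ → 0⁺`, the third-order Taylor bound
`e^λ - 1 - λ ≤ (λ²/2) (1 + λ)` squeezes `ρ(λ)` between an elementary function tending to `1` and `1`.
-/

open Real Filter Topology

lemma wbou_den_pos {x : ℝ} (hx : 0 < x) : 0 < 1 - exp (-x) - x * exp (-x) := by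
  have h1 : x + 1 < exp x := add_one_lt_exp hx.ne'
  have h2 : exp (-x) * exp x = 1 := by rw [← exp_add]; simp
  have h3 := exp_pos (-x)
  nlinarith [mul_lt_mul_of_pos_left h1 h3]

/-- The closed form `ρ = -D/2 + x² e^{-2x} / (2 D)`, on which all the estimates rest. -/
lemma wbouRho_eq_s6 {x : ℝ} (hx : 0 < x) :
    wbouRho x = -(1 - exp (-x) - x * exp (-x)) / 2 +
      (x * exp (-x)) ^ 2 / (2 * (1 - exp (-x) - x * exp (-x))) := by
  have hD := (wbou_den_pos hx).ne'
  have h2 : exp x = (exp (-x))⁻¹ := by rw [exp_neg, inv_inv]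
  have h3 := (exp_pos (-x)).ne'
  unfold wbouRho
  rw [h2]
  generalize exp (-x) = e at *
  obtain ⟨D, hDe⟩ : ∃ D, D = 1 - e - x * e := ⟨_, rfl⟩
  rw [← hDe] at hD ⊢
  field_simp
  linear_combination (D + 1) * hDe

lemma neg_half_lt_wbouRho {x : ℝ} (hx : 0 < x) : -(1 / 2 : ℝ) < wbouRho x := by
  rw [wbouRho_eq_s6 hx]
  have hD := wbou_den_pos hx
  have he := exp_pos (-x)
  have : 0 < (x * exp (-x)) ^ 2 / (2 * (1 - exp (-x) - x * exp (-x))) := by positivity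
  nlinarith [mul_pos hx he]

lemma wbouRho_lt_one {x : ℝ} (hx : 0 < x) : wbouRho x < 1 := by
  rw [wbouRho_eq_s6 hx]
  have hD := wbou_den_pos hx
  have he := exp_pos (-x)
  have he1 : exp (-x) < 1 := by simpa using hx
  have h2 : exp (-x) * exp x = 1 := by rw [← exp_add]; simp
  have hq := mul_le_mul_of_nonneg_left (quadratic_le_exp_of_nonneg hx.le) he.le
  rw [h2] at hq
  have key : (x * exp (-x)) ^ 2 / (2 * (1 - exp (-x) - x * exp (-x))) < 1 := by
    rw [div_lt_one (by positivity)]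
    nlinarith [mul_pos (mul_pos (mul_pos hx hx) he) (sub_pos.2 he1)]
  linarith

/-- The lower half of the squeeze at `0⁺`. -/
lemma le_wbouRho {x : ℝ} (hx : 0 < x) (hx1 : x ≤ 1) :
    -x ^ 2 / 2 + exp (-x) ^ 2 / (1 + x) ≤ wbouRho x := by
  rw [wbouRho_eq_s6 hx]
  have hD := wbou_den_pos hx
  have he := exp_pos (-x)
  have he1 : exp (-x) < 1 := by simpa using hx
  have h2 : exp (-x) * exp x = 1 := by rw [← exp_add]; simp
  have hb := exp_bound' hx.le hx1 (n := 3) (by norm_num)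
  norm_num [Finset.sum_range_succ, Nat.factorial] at hb
  have hb' : exp x - 1 - x ≤ x ^ 2 / 2 * (1 + x) := by nlinarith [pow_pos hx 3]
  have hDle : 1 - exp (-x) - x * exp (-x) ≤ x ^ 2 / 2 * (1 + x) := by
    have h4 : 0 ≤ x ^ 2 / 2 * (1 + x) := by positivity
    nlinarith [mul_le_mul_of_nonneg_left hb' he.le]
  have h5 : exp (-x) ^ 2 / (1 + x) ≤
      (x * exp (-x)) ^ 2 / (2 * (1 - exp (-x) - x * exp (-x))) := by
    rw [div_le_div_iff₀ (by positivity) (by positivity)]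
    nlinarith [mul_le_mul_of_nonneg_left hDle (sq_nonneg (exp (-x)))]
  -- The weaker bound `D ≤ x²` suffices for the first summand.
  have h6 : 1 - exp (-x) - x * exp (-x) ≤ x ^ 2 := by nlinarith [sq_nonneg x]
  linarith

/-- `−1/2 < ρ(λ) < 1` for every `λ > 0`; moreover `ρ(λ) → 1` as `λ → 0⁺`
and `ρ(λ) → −1/2` as `λ → ∞`. -/
theorem wbouRho_range :
    (∀ lam : ℝ, 0 < lam → -(1 / 2 : ℝ) < wbouRho lam ∧ wbouRho lam < 1) ∧
    Filter.Tendsto wbouRho (nhdsWithin 0 (Set.Ioi 0)) (nhds 1) ∧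
    Filter.Tendsto wbouRho Filter.atTop (nhds (-(1 / 2 : ℝ))) := by
  refine ⟨fun x hx => ⟨neg_half_lt_wbouRho hx, wbouRho_lt_one hx⟩, ?_, ?_⟩
  · have hlow : Tendsto (fun x : ℝ => -x ^ 2 / 2 + exp (-x) ^ 2 / (1 + x)) (𝓝[>] 0) (𝓝 1) := by
      have hc : ContinuousAt (fun x : ℝ => -x ^ 2 / 2 + exp (-x) ^ 2 / (1 + x)) 0 := by
        fun_prop (disch := norm_num)
      have ht := hc.tendsto
      norm_num at ht
      exact ht.mono_left nhdsWithin_le_nhds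
    refine tendsto_of_tendsto_of_tendsto_of_le_of_le' hlow tendsto_const_nhds ?_ ?_
    · filter_upwards [Ioc_mem_nhdsGT (zero_lt_one' ℝ)] with x hx using le_wbouRho hx.1 hx.2
    · filter_upwards [self_mem_nhdsWithin] with x hx using (wbouRho_lt_one hx).le
  · have h1 : Tendsto (fun x : ℝ => exp (-x)) atTop (𝓝 0) := tendsto_exp_neg_atTop_nhds_zero
    have h2 : Tendsto (fun x : ℝ => x * exp (-x)) atTop (𝓝 0) := by
      simpa using tendsto_pow_mul_exp_neg_atTop_nhds_zero 1
    have hD : Tendsto (fun x : ℝ => 1 - exp (-x) - x * exp (-x)) atTop (𝓝 1) := by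
      simpa using (h1.const_sub 1).sub h2
    have hlim := (hD.neg.div_const 2).add ((h2.pow 2).div (hD.const_mul 2) (by norm_num))
    norm_num at hlim
    norm_num
    refine hlim.congr' ?_
    filter_upwards [eventually_gt_atTop 0] with x hx
    rw [wbouRho_eq_s6 hx]
    ring
end

section
/- For every λ > 0 and every x ∈ ℝ, the Lebesgue integral over s ∈ ℝ of min(x²·exp(−2λ|s|), 1) equals x²/λ if |x| ≤ 1, and equals (2·log|x| + 1)/λ if |x| ≥ 1. -/
/-!
The integrand is even, so the integral is twice the integral over `(0, ∞)`. There
`x² exp(-2λs)` is decreasing. If `|x| ≤ 1` it never exceeds `1`, the minimum is inactive, and the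
exponential tail formula `integral_kernel_Ioi` at `c = 0` gives the value. If `|x| ≥ 1` it crosses
the level `1` at `T = log |x| / λ`: the integral is `T` on `(0, T]`, and the tail formula at `c = T`
gives `1 / (2λ)` on `(T, ∞)`, for a total of `2 (T + 1 / (2λ))`.
-/

open MeasureTheory Real

lemma integrableOn_kernel_Ioi {lam : ℝ} (hlam : 0 < lam) (x c : ℝ) :
    IntegrableOn (fun s : ℝ => x ^ 2 * Real.exp (-(2 * lam * s))) (Set.Ioi c) := by
  have h := (integrableOn_exp_mul_Ioi (a := -(2 * lam)) (by linarith) c).const_mul (x ^ 2)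
  simp only [neg_mul] at h
  exact h

lemma integral_kernel_Ioi {lam : ℝ} (hlam : 0 < lam) (x c : ℝ) :
    ∫ s in Set.Ioi c, x ^ 2 * Real.exp (-(2 * lam * s))
      = x ^ 2 * Real.exp (-(2 * lam * c)) / (2 * lam) := by
  have h := integral_exp_mul_Ioi (a := -(2 * lam)) (by linarith) c
  simp only [neg_mul] at h
  rw [integral_const_mul, h, neg_div_neg_eq, mul_div_assoc]

/-- For `x ≠ 0`, writing `x² = exp (2 log |x|)` turns the kernel into a single exponential, which
shows where it crosses the level `1`. -/
lemma kernel_eq_exp {x : ℝ} (hx : x ≠ 0) (lam s : ℝ) :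
    x ^ 2 * Real.exp (-(2 * lam * s)) = Real.exp (2 * (Real.log |x| - lam * s)) := by
  have h : x ^ 2 = Real.exp (2 * Real.log |x|) := by
    rw [two_mul, Real.exp_add, Real.exp_log (abs_pos.mpr hx), ← sq, sq_abs]
  rw [h, ← Real.exp_add]
  ring_nf

/-- For every `λ > 0` and `x ∈ ℝ`, the Lebesgue integral over `s ∈ ℝ` of
`min (x²·exp(−2λ|s|)) 1` equals `x²/λ` if `|x| ≤ 1` and `(2·log|x| + 1)/λ` if `|x| ≥ 1`. -/
theorem integral_min_sq_exp_kernel (lam : ℝ) (hlam : 0 < lam) (x : ℝ) :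
    (|x| ≤ 1 →
      ∫ s : ℝ, min (x ^ 2 * Real.exp (-(2 * lam * |s|))) 1 = x ^ 2 / lam) ∧
    (1 ≤ |x| →
      ∫ s : ℝ, min (x ^ 2 * Real.exp (-(2 * lam * |s|))) 1
        = (2 * Real.log |x| + 1) / lam) := by
  rw [integral_comp_abs (f := fun s : ℝ => min (x ^ 2 * Real.exp (-(2 * lam * s))) 1)]
  constructor
  · intro hx
    have hmin : Set.EqOn (fun s : ℝ => min (x ^ 2 * Real.exp (-(2 * lam * s))) 1)
        (fun s => x ^ 2 * Real.exp (-(2 * lam * s))) (Set.Ioi 0) := by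
      intro s hs
      have hs' : 0 < s := hs
      refine min_eq_left (mul_le_one₀ ((sq_le_one_iff_abs_le_one x).mpr hx) (exp_pos _).le ?_)
      exact Real.exp_le_one_iff.mpr (neg_nonpos.mpr (by positivity))
    rw [setIntegral_congr_fun measurableSet_Ioi hmin, integral_kernel_Ioi hlam]
    simp only [mul_zero, neg_zero, Real.exp_zero, mul_one]
    field_simp
  · intro hx
    have hx0 : x ≠ 0 := abs_pos.mp (by linarith)
    set T : ℝ := Real.log |x| / lam with hT
    have hT0 : 0 ≤ T := div_nonneg (Real.log_nonneg hx) hlam.le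
    have hlamT : lam * T = Real.log |x| := by rw [hT]; field_simp
    have hhead : Set.EqOn (fun s : ℝ => min (x ^ 2 * Real.exp (-(2 * lam * s))) 1)
        (fun _ => 1) (Set.Ioc 0 T) := by
      intro s hs
      refine min_eq_right ?_
      rw [kernel_eq_exp hx0, ← hlamT]
      have := mul_le_mul_of_nonneg_left hs.2 hlam.le
      exact Real.one_le_exp (by linarith)
    have htail : Set.EqOn (fun s : ℝ => min (x ^ 2 * Real.exp (-(2 * lam * s))) 1)
        (fun s => x ^ 2 * Real.exp (-(2 * lam * s))) (Set.Ioi T) := by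
      intro s hs
      refine min_eq_left ?_
      rw [kernel_eq_exp hx0, ← hlamT]
      have := mul_le_mul_of_nonneg_left (le_of_lt (Set.mem_Ioi.mp hs)) hlam.le
      exact Real.exp_le_one_iff.mpr (by linarith)
    rw [← Set.Ioc_union_Ioi_eq_Ioi hT0,
      setIntegral_union (Set.Ioc_disjoint_Ioi le_rfl) measurableSet_Ioi
        ((integrableOn_congr_fun hhead measurableSet_Ioc).mpr (integrableOn_const (by simp)))
        ((integrableOn_congr_fun htail measurableSet_Ioi).mpr (integrableOn_kernel_Ioi hlam x T)),
      setIntegral_congr_fun measurableSet_Ioc hhead,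
      setIntegral_congr_fun measurableSet_Ioi htail, integral_kernel_Ioi hlam,
      kernel_eq_exp hx0, hlamT, ← hlamT]
    simp [hT0]
    field_simp
end

section
/- Let λ > 0 and let ν be a measure on ℝ with ν({0}) = 0 satisfying the Lévy-measure condition ∫_ℝ min(1, x²) ν(dx) < ∞. Then ∫_ℝ ∫_ℝ min(x²·exp(−2λ|s|), 1) ds ν(dx) < ∞ if and only if ∫_{|x|>1} log|x| ν(dx) < ∞. -/
/-!
The inner integral `I(x) = ∫ min(x² e^{-2λ|s|}, 1) ds` is comparable to explicit functions of `x`.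
For `|x| > 1` put `a = log|x| / λ`, so that `x² e^{-2λ|s|} = e^{-2λ(|s| - a)}`. On `[-a, a]` the
integrand equals `1`, which contributes `2 log|x| / λ`; outside it decays exponentially in the
distance to `[-a, a]`, which contributes at most `2K`, where `K = ∫ e^{-2λ|s|} ds < ∞`. For
`|x| ≤ 1` one has `I(x) ≤ K x²`. Hence `I(x) ≥ (2/λ) log|x|` on `{|x| > 1}`
(`ofReal_log_le_lintegral`), and everywhere `I(x) ≤ 2K min(1, x²) + (2/λ) 1_{|x|>1} log|x|`
(`lintegral_min_le`). Integrating both bounds against `ν`, the Lévy condition takes care of the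
first term of the upper bound, so only the logarithmic moment matters.
-/

open MeasureTheory Real ENNReal

lemma lintegral_exp_neg_abs_lt_top {lam : ℝ} (hlam : 0 < lam) :
    ∫⁻ s : ℝ, ENNReal.ofReal (Real.exp (-(2 * lam * |s|))) < ∞ := by
  have h : Integrable (fun s : ℝ => Real.exp (-(2 * lam * |s|))) := by
    rw [← integrableOn_univ, ← Set.Iic_union_Ioi (a := (0 : ℝ)), integrableOn_union]
    constructor
    · refine (integrableOn_exp_mul_Iic (a := 2 * lam) (by positivity) 0).congr_fun ?_
        measurableSet_Iic
      intro s hs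
      simp only [abs_of_nonpos (Set.mem_Iic.1 hs)]
      ring_nf
    · refine (integrableOn_exp_mul_Ioi (a := -(2 * lam)) (by linarith) 0).congr_fun ?_
        measurableSet_Ioi
      intro s hs
      simp only [abs_of_pos (Set.mem_Ioi.1 hs)]
      ring_nf
  exact h.lintegral_lt_top

lemma sq_mul_exp_eq {lam : ℝ} (hlam : 0 < lam) {x : ℝ} (hx : 1 < |x|) (s : ℝ) :
    x ^ 2 * Real.exp (-(2 * lam * |s|)) =
      Real.exp (-(2 * lam * (|s| - Real.log |x| / lam))) := by
  have h : x ^ 2 = Real.exp (2 * Real.log |x|) := by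
    rw [two_mul, Real.exp_add, Real.exp_log (by linarith), ← sq, sq_abs]
  rw [h, ← Real.exp_add]
  congr 1
  field_simp
  ring

lemma ofReal_log_le_lintegral {lam : ℝ} (hlam : 0 < lam) {x : ℝ} (hx : 1 < |x|) :
    ENNReal.ofReal (2 / lam) * ENNReal.ofReal (Real.log |x|) ≤
      ∫⁻ s, ENNReal.ofReal (min (x ^ 2 * Real.exp (-(2 * lam * |s|))) 1) := by
  set a := Real.log |x| / lam with ha
  calc ENNReal.ofReal (2 / lam) * ENNReal.ofReal (Real.log |x|)
      = volume (Set.Icc (-a) a) := by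
        rw [Real.volume_Icc, ← ENNReal.ofReal_mul (by positivity)]
        congr 1
        rw [ha]
        ring
    _ = ∫⁻ s, (Set.Icc (-a) a).indicator 1 s := (lintegral_indicator_one measurableSet_Icc).symm
    _ ≤ _ := by
        refine lintegral_mono fun s => ?_
        by_cases hs : s ∈ Set.Icc (-a) a
        · have hs' : |s| ≤ a := abs_le.2 hs
          have h1 : (1 : ℝ) ≤ Real.exp (-(2 * lam * (|s| - a))) :=
            Real.one_le_exp (by nlinarith)
          rw [sq_mul_exp_eq hlam hx, ← ha, min_eq_right h1, Set.indicator_of_mem hs]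
          simp
        · simp [Set.indicator_of_notMem hs]

lemma lintegral_min_le_of_one_lt {lam : ℝ} (hlam : 0 < lam) {x : ℝ} (hx : 1 < |x|) :
    ∫⁻ s, ENNReal.ofReal (min (x ^ 2 * Real.exp (-(2 * lam * |s|))) 1) ≤
      ENNReal.ofReal (2 / lam) * ENNReal.ofReal (Real.log |x|) +
        2 * ∫⁻ s : ℝ, ENNReal.ofReal (Real.exp (-(2 * lam * |s|))) := by
  set a := Real.log |x| / lam with ha
  set g : ℝ → ℝ≥0∞ := fun s => ENNReal.ofReal (Real.exp (-(2 * lam * |s|))) with hg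
  have hgm : Measurable g := by fun_prop
  have key : ∀ s, ENNReal.ofReal (min (x ^ 2 * Real.exp (-(2 * lam * |s|))) 1) ≤
      (Set.Icc (-a) a).indicator 1 s + (g (s - a) + g (s + a)) := by
    intro s
    by_cases hs : s ∈ Set.Icc (-a) a
    · rw [Set.indicator_of_mem hs]
      refine le_trans ?_ le_self_add
      exact ENNReal.ofReal_le_one.2 (min_le_right _ _)
    · rw [Set.indicator_of_notMem hs, zero_add, sq_mul_exp_eq hlam hx, ← ha]
      refine (ENNReal.ofReal_le_ofReal (min_le_left _ _)).trans ?_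
      have ha0 : 0 < a := div_pos (Real.log_pos hx) hlam
      -- Outside `[-a, a]`, `|s| - a` is the distance from `s` to the nearer endpoint.
      rcases lt_or_ge a s with h | h
      · refine le_trans (le_of_eq ?_) le_self_add
        simp only [hg]
        rw [abs_of_pos (by linarith : 0 < s), abs_of_pos (by linarith : 0 < s - a)]
      · have h' : s < -a := by
          by_contra hc
          exact hs ⟨not_lt.1 hc, h⟩
        refine le_trans (le_of_eq ?_) le_add_self
        simp only [hg]
        rw [abs_of_neg (by linarith : s < 0), abs_of_neg (by linarith : s + a < 0)]
        ring_nf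
  calc _ ≤ ∫⁻ s, ((Set.Icc (-a) a).indicator 1 s + (g (s - a) + g (s + a))) := lintegral_mono key
    _ = volume (Set.Icc (-a) a) + ((∫⁻ s, g s) + (∫⁻ s, g s)) := by
        rw [lintegral_add_left (measurable_one.indicator measurableSet_Icc),
          lintegral_indicator_one measurableSet_Icc,
          lintegral_add_left (by fun_prop), lintegral_sub_right_eq_self g,
          lintegral_add_right_eq_self g]
    _ = _ := by
        rw [Real.volume_Icc, ← ENNReal.ofReal_mul (by positivity), two_mul]
        congr 2
        rw [ha]
        ring

lemma lintegral_min_le {lam : ℝ} (hlam : 0 < lam) (x : ℝ) :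
    ∫⁻ s, ENNReal.ofReal (min (x ^ 2 * Real.exp (-(2 * lam * |s|))) 1) ≤
      ENNReal.ofReal (2 / lam) *
          {x : ℝ | 1 < |x|}.indicator (fun x => ENNReal.ofReal (Real.log |x|)) x +
        (2 * ∫⁻ s : ℝ, ENNReal.ofReal (Real.exp (-(2 * lam * |s|)))) *
          ENNReal.ofReal (min 1 (x ^ 2)) := by
  by_cases hx : 1 < |x|
  · have h1 : (1 : ℝ) ≤ x ^ 2 := by
      rw [← sq_abs]
      nlinarith
    rw [Set.indicator_of_mem (by exact hx), min_eq_left h1, ENNReal.ofReal_one, mul_one]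
    exact lintegral_min_le_of_one_lt hlam hx
  · have h1 : x ^ 2 ≤ 1 := by
      rw [← sq_abs]
      nlinarith [abs_nonneg x, not_lt.1 hx]
    rw [Set.indicator_of_notMem (by exact hx), min_eq_right h1, mul_zero, zero_add]
    calc _ ≤ ∫⁻ s : ℝ, ENNReal.ofReal (x ^ 2) * ENNReal.ofReal (Real.exp (-(2 * lam * |s|))) := by
          refine lintegral_mono fun s => ?_
          rw [← ENNReal.ofReal_mul (by positivity)]
          exact ENNReal.ofReal_le_ofReal (min_le_left _ _)
      _ = (∫⁻ s : ℝ, ENNReal.ofReal (Real.exp (-(2 * lam * |s|)))) * ENNReal.ofReal (x ^ 2) := by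
          rw [lintegral_const_mul _ (by fun_prop), mul_comm]
      _ ≤ _ := by
          gcongr
          exact le_mul_of_one_le_left (zero_le) one_le_two

/-- Well-definedness criterion (Lemma 2.1): for a Lévy measure `ν` on `ℝ`
(`ν({0}) = 0` and `∫ min(1,x²) ν(dx) < ∞`), the double integral
`∫∫ min(x²e^{−2λ|s|}, 1) ds ν(dx)` is finite if and only if
`∫_{|x|>1} log|x| ν(dx) < ∞`. -/
theorem wbou_well_defined_iff_log_moment (lam : ℝ) (hlam : 0 < lam)
    (ν : Measure ℝ) (hν0 : ν {0} = 0)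
    (hν : ∫⁻ x, ENNReal.ofReal (min 1 (x ^ 2)) ∂ν < ∞) :
    (∫⁻ x, (∫⁻ s, ENNReal.ofReal (min (x ^ 2 * Real.exp (-(2 * lam * |s|))) 1)) ∂ν) < ∞ ↔
      (∫⁻ x in {x : ℝ | 1 < |x|}, ENNReal.ofReal (Real.log |x|) ∂ν) < ∞ := by
  have hS : MeasurableSet {x : ℝ | 1 < |x|} := measurableSet_lt measurable_const (by fun_prop)
  have hlog : Measurable fun x : ℝ => ENNReal.ofReal (Real.log |x|) := by fun_prop
  constructor
  · intro h
    have h2 : ENNReal.ofReal (2 / lam) *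
        ∫⁻ x in {x : ℝ | 1 < |x|}, ENNReal.ofReal (Real.log |x|) ∂ν < ∞ := by
      refine lt_of_le_of_lt ?_ h
      rw [← lintegral_const_mul _ hlog]
      exact (setLIntegral_mono' hS fun x hx => ofReal_log_le_lintegral hlam hx).trans
        (setLIntegral_le_lintegral _ _)
    have hpos : ENNReal.ofReal (2 / lam) ≠ 0 := (ENNReal.ofReal_pos.2 (by positivity)).ne'
    exact ENNReal.lt_top_of_mul_ne_top_right h2.ne hpos
  · intro h
    refine (lintegral_mono fun x => lintegral_min_le hlam x).trans_lt ?_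
    rw [lintegral_add_left ((hlog.indicator hS).const_mul _),
      lintegral_const_mul _ (hlog.indicator hS), lintegral_const_mul _ (by fun_prop),
      lintegral_indicator hS]
    exact ENNReal.add_lt_top.2 ⟨ENNReal.mul_lt_top ENNReal.ofReal_lt_top h,
      ENNReal.mul_lt_top
        (ENNReal.mul_lt_top (by simp) (lintegral_exp_neg_abs_lt_top hlam)) hν⟩
end

section
/- Let g : (0,∞) → ℝ be continuous and Lebesgue integrable on (0,∞), and define ḡ(y) := 2·∫_1^∞ g(x·y) dx for y > 0. Then ḡ is differentiable at every y > 0 and g(y) = (1/2)·(−ḡ(y) − y·ḡ′(y)). -/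
/-!
Substituting `u = x * z` gives `ḡ(z) = 2 z⁻¹ G(z)` for `z > 0`, where `G(z) = ∫_z^∞ g` is the
tail integral. By the fundamental theorem of calculus `G' = -g` on `(0,∞)`, since `g` is
continuous there, so `(z ḡ(z))' = -2 g(z)`; expanding the left side by the product rule is the
claimed identity.
-/

open MeasureTheory Real

/-- Near `y`, the tail integral is `∫_0^∞ g - ∫_0^z g`, so the fundamental theorem of calculus
applies. -/
lemma hasDerivAt_tail_integral (g : ℝ → ℝ) (hgc : ContinuousOn g (Set.Ioi 0))
    (hgi : IntegrableOn g (Set.Ioi 0)) (y : ℝ) (hy : 0 < y) :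
    HasDerivAt (fun z : ℝ => ∫ x in Set.Ioi z, g x) (-g y) y := by
  have hFTC : HasDerivAt (fun z : ℝ => ∫ x in (0 : ℝ)..z, g x) (g y) y :=
    intervalIntegral.integral_hasDerivAt_right
      ((intervalIntegrable_iff_integrableOn_Ioc_of_le hy.le).2
        (hgi.mono_set Set.Ioc_subset_Ioi_self))
      (hgc.stronglyMeasurableAtFilter isOpen_Ioi y hy)
      (hgc.continuousAt (Ioi_mem_nhds hy))
  refine (hFTC.const_sub (∫ x in Set.Ioi (0 : ℝ), g x)).congr_of_eventuallyEq ?_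
  filter_upwards [Ioi_mem_nhds hy] with z hz
  have h := intervalIntegral.integral_Ioi_sub_Ioi hgi (le_of_lt hz)
  linarith

/-- Inversion of the Lévy density transformation `ḡ(y) = 2∫_1^∞ g(xy) dx`: if `g` is
continuous and integrable on `(0,∞)`, then `ḡ` is differentiable at every `y > 0` and
`g(y) = (1/2)(−ḡ(y) − y·ḡ′(y))`. -/
theorem levy_density_inversion (g : ℝ → ℝ) (hgc : ContinuousOn g (Set.Ioi 0))
    (hgi : IntegrableOn g (Set.Ioi 0)) (y : ℝ) (hy : 0 < y) :
    DifferentiableAt ℝ (fun z : ℝ => 2 * ∫ x in Set.Ioi (1 : ℝ), g (x * z)) y ∧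
      g y = (1 / 2) *
        (-(2 * ∫ x in Set.Ioi (1 : ℝ), g (x * y))
          - y * deriv (fun z : ℝ => 2 * ∫ x in Set.Ioi (1 : ℝ), g (x * z)) y) := by
  have heq : ∀ z : ℝ, 0 < z →
      2 * ∫ x in Set.Ioi (1 : ℝ), g (x * z) = 2 * (z⁻¹ * ∫ x in Set.Ioi z, g x) := by
    intro z hz
    rw [integral_comp_mul_right_Ioi g 1 hz, one_mul, smul_eq_mul]
  have hd : HasDerivAt (fun z : ℝ => 2 * ∫ x in Set.Ioi (1 : ℝ), g (x * z))
      (2 * (-(y ^ 2)⁻¹ * (∫ x in Set.Ioi y, g x) + y⁻¹ * -g y)) y := by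
    refine (((hasDerivAt_inv hy.ne').mul
      (hasDerivAt_tail_integral g hgc hgi y hy)).const_mul 2).congr_of_eventuallyEq ?_
    filter_upwards [Ioi_mem_nhds hy] with z hz
    exact heq z hz
  refine ⟨hd.differentiableAt, ?_⟩
  rw [hd.deriv, heq y hy]
  field_simp
  ring
end
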